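/- Let X be a metric space with Hilbert space compression δ > 0, fix 0 < p < δ and a, b, r > 0. Then for all sufficiently large n, there exists a Hilbert space H and unit vectors (ξ_n^x)_{x∈X} in H such that: (1) ‖ξ_n^x − ξ_n^y‖ ≤ 1/(a n^b) whenever d(x,y) ≤ n^r; and (2) ‖ξ_n^x − ξ_n^y‖ ≥ 1 whenever d(x,y) ≥ n^{(r+b+p)/(δ−p)}. -/

import Mathlib

open scoped TensorProduct InnerProductSpace

/-- Tensor powers: a feature map for the kernel `⟪x, y⟫ ^ n`. -/
theorem exists_pow_feature (H : Type) [NormedAddCommGroup H] [InnerProductSpace ℝ H] (n : ℕ) :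
    ∃ (T : Type) (_ : NormedAddCommGroup T) (_ : InnerProductSpace ℝ T) (f : H → T),
      ∀ x y : H, inner ℝ (f x) (f y) = (inner ℝ x y : ℝ) ^ n := by
  induction n with
  | zero => exact ⟨ℝ, inferInstance, inferInstance, fun _ => 1, fun x y => by simp⟩
  | succ n ih =>
    obtain ⟨T, i1, i2, f, hf⟩ := ih
    refine ⟨T ⊗[ℝ] H, inferInstance, inferInstance, fun x => f x ⊗ₜ x, fun x y => ?_⟩
    rw [TensorProduct.inner_tmul, hf, pow_succ]

/-- The Fock space exponential: a feature map for the kernel `exp ⟪x, y⟫`. -/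
theorem exists_exp_feature (H : Type) [NormedAddCommGroup H] [InnerProductSpace ℝ H] :
    ∃ (T : Type) (_ : NormedAddCommGroup T) (_ : InnerProductSpace ℝ T) (f : H → T),
      ∀ x y : H, inner ℝ (f x) (f y) = Real.exp (inner ℝ x y) := by
  choose T i1 i2 f hf using exists_pow_feature H
  have hs : ∀ n : ℕ, (√(n.factorial : ℝ))⁻¹ * (√(n.factorial : ℝ))⁻¹ = (n.factorial : ℝ)⁻¹ := by
    intro n
    rw [← mul_inv, Real.mul_self_sqrt (by positivity)]
  have hmem : ∀ x : H, Memℓp (fun n => (√(n.factorial : ℝ))⁻¹ • f n x) 2 := by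
    intro x
    apply memℓp_gen
    have h := Real.summable_pow_div_factorial (inner ℝ x x)
    refine h.congr fun n => ?_
    have h2 : ((2 : ENNReal).toReal) = ((2 : ℕ) : ℝ) := by simp
    rw [h2, Real.rpow_natCast, ← real_inner_self_eq_norm_sq, real_inner_smul_left,
      real_inner_smul_right, hf, ← mul_assoc, hs, div_eq_inv_mul]
  refine ⟨lp T 2, inferInstance, inferInstance,
    fun x => ⟨fun n => (√(n.factorial : ℝ))⁻¹ • f n x, hmem x⟩, fun x y => ?_⟩
  rw [lp.inner_eq_tsum, Real.exp_eq_exp_ℝ, NormedSpace.exp_eq_tsum_div]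
  refine tsum_congr fun n => ?_
  change inner ℝ ((√(n.factorial : ℝ))⁻¹ • f n x) ((√(n.factorial : ℝ))⁻¹ • f n y) = _
  rw [real_inner_smul_left, real_inner_smul_right, hf, ← mul_assoc, hs, div_eq_inv_mul]

/-- Unit vectors for the Gaussian kernel. -/
theorem exists_gauss_feature (H : Type) [NormedAddCommGroup H] [InnerProductSpace ℝ H] :
    ∃ (T : Type) (_ : NormedAddCommGroup T) (_ : InnerProductSpace ℝ T) (f : H → T),
      (∀ x, ‖f x‖ = 1) ∧
      ∀ x y : H, ‖f x - f y‖ ^ 2 = 2 * (1 - Real.exp (-(‖x - y‖ ^ 2 / 2))) := by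
  obtain ⟨T, i1, i2, f, hf⟩ := exists_exp_feature H
  have key : ∀ x y : H, inner ℝ (Real.exp (-(‖x‖ ^ 2 / 2)) • f x)
      (Real.exp (-(‖y‖ ^ 2 / 2)) • f y) = Real.exp (-(‖x - y‖ ^ 2 / 2)) := by
    intro x y
    rw [real_inner_smul_left, real_inner_smul_right, hf, ← Real.exp_add, ← Real.exp_add,
      norm_sub_sq_real]
    congr 1
    ring
  have hn : ∀ x : H, ‖Real.exp (-(‖x‖ ^ 2 / 2)) • f x‖ ^ 2 = 1 := by
    intro x
    rw [← real_inner_self_eq_norm_sq, key]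
    simp
  refine ⟨T, i1, i2, fun x => Real.exp (-(‖x‖ ^ 2 / 2)) • f x, fun x => ?_, fun x y => ?_⟩
  · exact (pow_eq_one_iff_of_nonneg (norm_nonneg _) two_ne_zero).1 (hn x)
  · rw [norm_sub_sq_real, hn, hn, key]
    ring


/-- Let `X` be a metric space with Hilbert space compression `δ > 0`, i.e. for
every `0 < q < δ` there is a large-scale Lipschitz embedding with lower bound
of exponent `δ − q`. Fix `0 < p < δ` and `a, b, r > 0`. Then for all
sufficiently large `n` there are a Hilbert space and unit vectors
`(ξ_n^x)_{x∈X}` with `‖ξ_n^x − ξ_n^y‖ ≤ 1/(a n^b)` when `d(x,y) ≤ n^r` and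
`‖ξ_n^x − ξ_n^y‖ ≥ 1` when `d(x,y) ≥ n^{(r+b+p)/(δ−p)}`. -/
theorem compression_explicit_unit_vectors
    {X : Type*} [MetricSpace X] (δ : ℝ) (hδ : 0 < δ)
    (hcomp : ∀ q : ℝ, 0 < q → q < δ →
      ∃ (H : Type) (_ : NormedAddCommGroup H) (_ : InnerProductSpace ℝ H)
        (F : X → H) (C Ctil D Dtil : ℝ), 0 < C ∧ 0 < Ctil ∧ 0 ≤ D ∧ 0 ≤ Dtil ∧
        ∀ x y : X,
          (1 / C) * dist x y ^ (δ - q) - D ≤ ‖F x - F y‖ ∧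
          ‖F x - F y‖ ≤ Ctil * dist x y + Dtil)
    (p a b r : ℝ) (hp0 : 0 < p) (hpδ : p < δ) (ha : 0 < a) (hb : 0 < b) (hr : 0 < r) :
    ∃ N : ℕ, ∀ n : ℕ, N ≤ n →
      ∃ (H : Type) (_ : NormedAddCommGroup H) (_ : InnerProductSpace ℝ H)
        (ξ : X → H),
        (∀ x : X, ‖ξ x‖ = 1) ∧
        (∀ x y : X, dist x y ≤ (n : ℝ) ^ r → ‖ξ x - ξ y‖ ≤ 1 / (a * (n : ℝ) ^ b)) ∧
        (∀ x y : X, (n : ℝ) ^ ((r + b + p) / (δ - p)) ≤ dist x y → 1 ≤ ‖ξ x - ξ y‖) := by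
  obtain ⟨H, i1, i2, F, C, Ct, D, Dt, hC, hCt, hD, hDt, hF⟩ := hcomp p hp0 hpδ
  obtain ⟨T, j1, j2, f, hf1, hf2⟩ := exists_gauss_feature H
  have hev : ∀ᶠ n : ℕ in Filter.atTop,
      C * (D + 2 * (a * (Ct + Dt))) ≤ (n : ℝ) ^ p :=
    ((tendsto_rpow_atTop hp0).comp tendsto_natCast_atTop_atTop).eventually_ge_atTop _
  obtain ⟨N, hN⟩ := Filter.eventually_atTop.1 (hev.and (Filter.eventually_ge_atTop 1))
  refine ⟨N, fun n hn => ?_⟩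
  obtain ⟨hnp, hn1⟩ := hN n hn
  have hn1' : (1 : ℝ) ≤ n := by exact_mod_cast hn1
  have hn0 : (0 : ℝ) < n := by linarith
  have hR1 : (1 : ℝ) ≤ (n : ℝ) ^ r := Real.one_le_rpow hn1' hr.le
  have hB1 : (1 : ℝ) ≤ (n : ℝ) ^ b := Real.one_le_rpow hn1' hb.le
  have hsplit : (n : ℝ) ^ (r + b + p) = (n : ℝ) ^ r * (n : ℝ) ^ b * (n : ℝ) ^ p := by
    rw [Real.rpow_add hn0, Real.rpow_add hn0]
  set R := (n : ℝ) ^ r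
  set B := (n : ℝ) ^ b
  set P := (n : ℝ) ^ p
  have hρ : 0 < Ct * R + Dt := by positivity
  have haB : 0 < a * B := by positivity
  set c : ℝ := 1 / (a * B * (Ct * R + Dt)) with hc
  have hc0 : 0 < c := by positivity
  have hdist : ∀ x y, ‖c • F x - c • F y‖ = c * ‖F x - F y‖ := by
    intro x y
    rw [← smul_sub, norm_smul, Real.norm_of_nonneg hc0.le]
  refine ⟨T, j1, j2, fun x => f (c • F x), fun x => hf1 _, fun x y hxy => ?_, fun x y hxy => ?_⟩
  · refine (pow_le_pow_iff_left₀ (by positivity) (by positivity) two_ne_zero).1 ?_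
    rw [hf2, hdist]
    have h1 : ‖F x - F y‖ ≤ Ct * R + Dt :=
      (hF x y).2.trans (by gcongr)
    have h2 : c * ‖F x - F y‖ ≤ 1 / (a * B) := by
      calc c * ‖F x - F y‖ ≤ c * (Ct * R + Dt) := by gcongr
        _ = 1 / (a * B) := by rw [hc]; field_simp
    have h3 : (c * ‖F x - F y‖) ^ 2 ≤ (1 / (a * B)) ^ 2 := by gcongr
    have h4 := Real.add_one_le_exp (-((c * ‖F x - F y‖) ^ 2 / 2))
    linarith
  · have hdp : 0 < δ - p := by linarith
    have h1 : R * B * P ≤ dist x y ^ (δ - p) := by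
      rw [← hsplit]
      calc (n : ℝ) ^ (r + b + p) = ((n : ℝ) ^ ((r + b + p) / (δ - p))) ^ (δ - p) := by
            rw [← Real.rpow_mul hn0.le, div_mul_cancel₀ _ hdp.ne']
        _ ≤ _ := Real.rpow_le_rpow (by positivity) hxy hdp.le
    have hRB : 1 ≤ R * B := one_le_mul_of_one_le_of_one_le hR1 hB1
    have h2 : R * B * (D + 2 * (a * (Ct + Dt))) ≤ 1 / C * dist x y ^ (δ - p) := by
      rw [one_div, le_inv_mul_iff₀ hC]
      calc _ = R * B * (C * (D + 2 * (a * (Ct + Dt)))) := by ring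
        _ ≤ R * B * P := by gcongr
        _ ≤ _ := h1
    have h3 : 2 * (a * B * (Ct * R + Dt)) ≤ ‖F x - F y‖ := by
      have h4 := (hF x y).1
      have h5 : D ≤ R * B * D := le_mul_of_one_le_left hD hRB
      have h6 : a * B * Dt ≤ a * B * Dt * R := le_mul_of_one_le_right (by positivity) hR1
      nlinarith
    have h4 : 2 ≤ c * ‖F x - F y‖ := by
      calc (2 : ℝ) = c * (2 * (a * B * (Ct * R + Dt))) := by rw [hc]; field_simp
        _ ≤ _ := by gcongr
    have h5 : (2 : ℝ) ^ 2 ≤ (c * ‖F x - F y‖) ^ 2 := by gcongr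
    have h6 : Real.exp (-((c * ‖F x - F y‖) ^ 2 / 2)) ≤ 1 / 2 := by
      rw [Real.exp_neg, one_div]
      apply inv_anti₀ two_pos
      have := Real.add_one_le_exp ((c * ‖F x - F y‖) ^ 2 / 2)
      linarith
    refine (pow_le_pow_iff_left₀ (by positivity) (by positivity) two_ne_zero).1 ?_
    rw [hf2, hdist]
    linarith
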